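/- arXiv:1011.3654 — 2 statements merged into one kernel-verified Lean document; each statement's English description precedes it below -/
import Mathlib

section
/- Let m ≥ 1 be an integer and suppose q ≠ 0. A polynomial f ∈ K[X] is diagonally (G(m,n),q)-harmonic (i.e., D_{q,d} f = 0 for every d ∈ ℕ^ℓ with |d| a positive multiple of m) if and only if D_{q,d} f = 0 for every d ∈ ℕ^ℓ with |d| = m or |d| = 2m. -/
open MvPolynomial

/-- The operator `∂_j^d = ∂_{1j}^{d 1} ⋯ ∂_{ℓj}^{d ℓ}` on `K[X]`,
`X` an `ℓ × n` matrix of variables. -/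
noncomputable def pdj {K : Type*} [Field K] {ℓ n : ℕ} (d : Fin ℓ → ℕ) (j : Fin n) :
    Module.End K (MvPolynomial (Fin ℓ × Fin n) K) :=
  ((List.finRange ℓ).map fun i =>
    ((pderiv (i, j)).toLinearMap : Module.End K (MvPolynomial (Fin ℓ × Fin n) K)) ^ d i).prod

/-- The deformed operator
`D_{q,d} = ∑_j (1 + q (x_{1j}∂_{1j} + ⋯ + x_{ℓj}∂_{ℓj})) ∘ ∂_j^d` on `K[X]`. -/
noncomputable def Dq {K : Type*} [Field K] (ℓ n : ℕ) (q : K) (d : Fin ℓ → ℕ) :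
    Module.End K (MvPolynomial (Fin ℓ × Fin n) K) :=
  ∑ j : Fin n,
    (1 + q • ∑ i : Fin ℓ,
        (LinearMap.mulLeft K (X (i, j)) * (pderiv (i, j)).toLinearMap)) * pdj d j

/-!
Every operator `D_d = D_{q,d}` is a sum over the columns `j` of `(1 + q E_j) ∂_j^d`, where `E_j` is
the Euler derivation of the column. As `[∂_j^d, E_j] = |d| ∂_j^d` and distinct columns do not
interact, the `D_d` satisfy the Witt-type relation `[D_a, D_b] = q (|a| - |b|) D_{a+b}`. Hence
annihilation in degrees `r` and `s` propagates to degree `r + s` as soon as `q (r - s) ≠ 0` in `K`.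
From degrees `m` and `2m` one reaches every `k m` with `k ≥ 3`, as `m + (k-1)m` or `2m + (k-2)m`:
the two differences of degrees are `(k-2)m` and `(k-4)m`, which cannot both vanish in `K` if
`2m ≠ 0` there.
-/

attribute [local instance] LieRing.ofAssociativeRing

section AssociativeAlgebra

variable {R A : Type*} [CommRing R] [Ring A] [Algebra R A]

lemma lie_mul_of_lie_eq_smul {x y e : A} {a b : R} (hx : ⁅x, e⁆ = a • x) (hy : ⁅y, e⁆ = b • y) :
    ⁅x * y, e⁆ = (a + b) • (x * y) := by
  calc ⁅x * y, e⁆ = ⁅x, e⁆ * y + x * ⁅y, e⁆ := by simp only [Ring.lie_def]; noncomm_ring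
    _ = (a + b) • (x * y) := by rw [hx, hy, smul_mul_assoc, mul_smul_comm, add_smul]

lemma lie_pow_of_lie_eq_smul {x e : A} {a : R} (hx : ⁅x, e⁆ = a • x) (t : ℕ) :
    ⁅x ^ t, e⁆ = (t * a) • x ^ t := by
  induction t with
  | zero => simp [Ring.lie_def]
  | succ t ih => rw [pow_succ, lie_mul_of_lie_eq_smul ih hx, Nat.cast_succ, add_one_mul]

lemma lie_list_prod_of_lie_eq_smul {ι : Type*} {x : ι → A} {e : A} {a : ι → R}
    (hx : ∀ i, ⁅x i, e⁆ = a i • x i) (l : List ι) :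
    ⁅(l.map x).prod, e⁆ = (l.map a).sum • (l.map x).prod := by
  induction l with
  | nil => simp [Ring.lie_def]
  | cons i l ih =>
    simpa only [List.map_cons, List.prod_cons, List.sum_cons]
      using lie_mul_of_lie_eq_smul (hx i) ih

lemma lie_one_add_smul_of_lie_eq_smul {x e : A} {a : R} (hx : ⁅x, e⁆ = a • x) (q : R) :
    ⁅x, 1 + q • e⁆ = (q * a) • x := by
  calc ⁅x, 1 + q • e⁆ = q • ⁅x, e⁆ := by
        simp only [Ring.lie_def, mul_add, add_mul, mul_one, one_mul, mul_smul_comm,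
          smul_mul_assoc, smul_sub, add_sub_add_left_eq_sub]
    _ = (q * a) • x := by rw [hx, smul_smul]

lemma lie_mul_mul_of_lie_eq_smul {u x y : A} {a b : R} (hxy : Commute x y)
    (hx : ⁅x, u⁆ = a • x) (hy : ⁅y, u⁆ = b • y) :
    ⁅u * x, u * y⁆ = (a - b) • (u * (x * y)) := by
  calc ⁅u * x, u * y⁆ = u * (⁅x, u⁆ * y) - u * (⁅y, u⁆ * x) + u * u * ⁅x, y⁆ := by
        simp only [Ring.lie_def]; noncomm_ring
    _ = (a - b) • (u * (x * y)) := by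
        rw [hx, hy, hxy.lie_eq, smul_mul_assoc, smul_mul_assoc, hxy.eq, mul_smul_comm,
          mul_smul_comm, mul_zero, add_zero, sub_smul]

end AssociativeAlgebra

section PartialDerivatives

variable {R σ : Type*} [CommRing R]

lemma lie_pderiv_pderiv (p p' : σ) :
    ⁅(pderiv p : Derivation R (MvPolynomial σ R) (MvPolynomial σ R)),
      (pderiv p' : Derivation R (MvPolynomial σ R) (MvPolynomial σ R))⁆ = 0 := by
  classical
  refine derivation_ext fun r => ?_
  simp [Derivation.commutator_apply, pderiv_X, Pi.single_apply, apply_ite]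

lemma commute_pderiv_pow (p p' : σ) (s t : ℕ) :
    Commute ((pderiv p).toLinearMap ^ s : Module.End R (MvPolynomial σ R))
      ((pderiv p').toLinearMap ^ t) := by
  refine Commute.pow_pow (commute_iff_lie_eq.mpr ?_) s t
  rw [← Derivation.commutator_coe_linear_map, lie_pderiv_pderiv, Derivation.coe_zero_linearMap]

variable (R) in
/-- The Euler derivation `∑_{p ∈ s} x_p ∂_p` in the variables indexed by `s`. The operator
multiplied by `q` in `Dq` is the case where `s` is a column of the matrix of variables. -/
noncomputable def partialEuler (s : Finset σ) :
    Derivation R (MvPolynomial σ R) (MvPolynomial σ R) :=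
  ∑ p ∈ s, (X p : MvPolynomial σ R) • pderiv p

lemma partialEuler_apply (s : Finset σ) (f : MvPolynomial σ R) :
    partialEuler R s f = ∑ p ∈ s, X p * pderiv p f := by
  rw [partialEuler, ← Derivation.coeFnAddMonoidHom_apply, map_sum, Finset.sum_apply]
  rfl

lemma partialEuler_X [DecidableEq σ] (s : Finset σ) (p : σ) :
    partialEuler R s (X p) = if p ∈ s then X p else 0 := by
  simp [partialEuler_apply, pderiv_X, Pi.single_apply]

lemma lie_pderiv_partialEuler [DecidableEq σ] (p : σ) (s : Finset σ) :
    ⁅(pderiv p : Derivation R (MvPolynomial σ R) (MvPolynomial σ R)), partialEuler R s⁆ =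
      (if p ∈ s then 1 else 0 : R) • pderiv p := by
  refine derivation_ext fun r => ?_
  rw [Derivation.commutator_apply, partialEuler_X]
  obtain rfl | hr := eq_or_ne r p
  · split_ifs <;> simp
  · split_ifs <;> simp [pderiv_X_of_ne hr]

lemma lie_partialEuler_partialEuler (s t : Finset σ) :
    ⁅partialEuler R s, partialEuler R t⁆ = 0 := by
  classical
  refine derivation_ext fun r => ?_
  rw [Derivation.commutator_apply, partialEuler_X, partialEuler_X]
  split_ifs with ht hs <;> simp [partialEuler_X, *]

end PartialDerivatives

section Columns

variable {K : Type*} [Field K] {ℓ n : ℕ}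

/-- The Euler operator `E_j = x_{1j}∂_{1j} + ⋯ + x_{ℓj}∂_{ℓj}` of the `j`-th column. -/
noncomputable def columnEuler (j : Fin n) : Module.End K (MvPolynomial (Fin ℓ × Fin n) K) :=
  (partialEuler K (Finset.univ ×ˢ {j})).toLinearMap

lemma commute_columnEuler (j k : Fin n) :
    Commute (columnEuler j : Module.End K (MvPolynomial (Fin ℓ × Fin n) K)) (columnEuler k) := by
  rw [commute_iff_lie_eq, columnEuler, columnEuler, ← Derivation.commutator_coe_linear_map,
    lie_partialEuler_partialEuler, Derivation.coe_zero_linearMap]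

lemma commute_pdj (a b : Fin ℓ → ℕ) (j k : Fin n) : Commute (pdj (K := K) a j) (pdj b k) := by
  refine Commute.list_prod_left _ _ fun x hx => Commute.list_prod_right _ _ fun y hy => ?_
  obtain ⟨i, -, rfl⟩ := List.mem_map.mp hx
  obtain ⟨i', -, rfl⟩ := List.mem_map.mp hy
  exact commute_pderiv_pow _ _ _ _

lemma pdj_eq_noncommProd (d : Fin ℓ → ℕ) (j : Fin n) :
    pdj (K := K) d j = Finset.univ.noncommProd (fun i => (pderiv (i, j)).toLinearMap ^ d i)
      fun _ _ _ _ _ => commute_pderiv_pow _ _ _ _ := by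
  simp only [← List.toFinset_finRange]
  exact (Finset.noncommProd_toFinset _ _ _ (List.nodup_finRange ℓ)).symm

lemma pdj_add (a b : Fin ℓ → ℕ) (j : Fin n) : pdj (K := K) (a + b) j = pdj a j * pdj b j := by
  simp only [pdj_eq_noncommProd, Pi.add_apply, pow_add]
  exact Finset.noncommProd_mul_distrib _ _ _ _ fun _ _ _ _ _ => commute_pderiv_pow _ _ _ _

lemma lie_pderiv_columnEuler (i : Fin ℓ) (j k : Fin n) :
    ⁅((pderiv (i, j)).toLinearMap : Module.End K (MvPolynomial (Fin ℓ × Fin n) K)),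
        columnEuler (K := K) k⁆ =
      (if j = k then 1 else 0 : K) • (pderiv (i, j)).toLinearMap := by
  rw [columnEuler, ← Derivation.commutator_coe_linear_map, lie_pderiv_partialEuler]
  simp only [Finset.mem_product, Finset.mem_univ, true_and, Finset.mem_singleton]
  rfl

lemma lie_pdj_columnEuler (d : Fin ℓ → ℕ) (j k : Fin n) :
    ⁅pdj (K := K) d j, columnEuler (K := K) k⁆ =
      (if j = k then ((∑ i, d i : ℕ) : K) else 0) • pdj d j := by
  have lie_pderiv_pow (i : Fin ℓ) := lie_pow_of_lie_eq_smul
    (lie_pderiv_columnEuler (K := K) i j k) (d i)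
  refine (lie_list_prod_of_lie_eq_smul lie_pderiv_pow (List.finRange ℓ)).trans ?_
  rw [← List.ofFn_eq_map, List.sum_ofFn, ← Finset.sum_mul, mul_ite, mul_one, mul_zero,
    Nat.cast_sum, pdj]

/-- The contribution `(1 + q E_j) ∂_j^d` of the `j`-th column to `Dq ℓ n q d`. -/
noncomputable def columnDq (q : K) (d : Fin ℓ → ℕ) (j : Fin n) :
    Module.End K (MvPolynomial (Fin ℓ × Fin n) K) :=
  (1 + q • columnEuler j) * pdj d j

lemma Dq_eq_sum_columnDq (q : K) (d : Fin ℓ → ℕ) : Dq ℓ n q d = ∑ j, columnDq q d j := by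
  refine Finset.sum_congr rfl fun j _ => ?_
  rw [columnDq]
  congr 3
  refine LinearMap.ext fun f => ?_
  simp [columnEuler, partialEuler_apply]

lemma lie_columnDq_self (q : K) (a b : Fin ℓ → ℕ) (j : Fin n) :
    ⁅columnDq q a j, columnDq q b j⁆ =
      (q * (((∑ i, a i : ℕ) : K) - (∑ i, b i : ℕ))) • columnDq q (a + b) j := by
  have lie_pdj (d : Fin ℓ → ℕ) :
      ⁅pdj (K := K) d j, 1 + q • columnEuler (K := K) j⁆ = (q * (∑ i, d i : ℕ) : K) • pdj d j := by
    rw [lie_one_add_smul_of_lie_eq_smul (lie_pdj_columnEuler d j j), if_pos rfl]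
  rw [columnDq, columnDq, lie_mul_mul_of_lie_eq_smul (commute_pdj a b j j) (lie_pdj a) (lie_pdj b),
    columnDq, pdj_add, mul_sub]

lemma commute_columnDq_of_ne (q : K) (a b : Fin ℓ → ℕ) {j k : Fin n} (hjk : j ≠ k) :
    Commute (columnDq q a j) (columnDq q b k) := by
  have commute_pdj_euler (d : Fin ℓ → ℕ) {j k : Fin n} (hjk : j ≠ k) :
      Commute (pdj (K := K) d j) (1 + q • columnEuler k) := by
    rw [commute_iff_lie_eq, lie_one_add_smul_of_lie_eq_smul (lie_pdj_columnEuler d j k),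
      if_neg hjk, mul_zero, zero_smul]
  have commute_euler : Commute (1 + q • columnEuler (K := K) (ℓ := ℓ) j) (1 + q • columnEuler k) :=
    (Commute.one_left _).add_left
      ((Commute.one_right _).add_right (((commute_columnEuler j k).smul_left q).smul_right q))
  exact (commute_euler.mul_right (commute_pdj_euler b hjk.symm).symm).mul_left
    ((commute_pdj_euler a hjk).mul_right (commute_pdj a b j k))

lemma lie_Dq_Dq (q : K) (a b : Fin ℓ → ℕ) :
    ⁅Dq ℓ n q a, Dq ℓ n q b⁆ =
      (q * (((∑ i, a i : ℕ) : K) - (∑ i, b i : ℕ))) • Dq ℓ n q (a + b) := by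
  simp only [Dq_eq_sum_columnDq, sum_lie_sum, Finset.smul_sum]
  refine Finset.sum_congr rfl fun j _ => ?_
  rw [Finset.sum_eq_single_of_mem j (Finset.mem_univ j) fun k _ hkj =>
    (commute_columnDq_of_ne q a b hkj.symm).lie_eq, lie_columnDq_self]

end Columns

lemma exists_add_eq_of_sum_eq_add {ι : Type*} [Fintype ι] {d : ι → ℕ} {r s : ℕ}
    (hd : ∑ i, d i = r + s) : ∃ a b : ι → ℕ, a + b = d ∧ ∑ i, a i = r ∧ ∑ i, b i = s := by
  obtain ⟨a, had, ha⟩ := Finsupp.exists_le_degree_eq (Finsupp.equivFunOnFinite.symm d) r (by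
    simp [Finsupp.degree_eq_sum, hd])
  have hadd : ⇑a + (d - ⇑a) = d := add_tsub_cancel_of_le had
  rw [Finsupp.degree_eq_sum] at ha
  refine ⟨a, d - ⇑a, hadd, ha, ?_⟩
  rw [← hadd] at hd
  simp only [Pi.add_apply, Finset.sum_add_distrib] at hd
  omega

section HarmonicInDegree

variable {K : Type*} [Field K] {ℓ n : ℕ} {q : K} {f : MvPolynomial (Fin ℓ × Fin n) K}

/-- `f` is annihilated by all the operators `D_{q,d}` with `|d| = r`. The diagonally
`(G(m,n),q)`-harmonic polynomials are those for which this holds at every positive multiple `r` of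
`m`. -/
def IsHarmonicInDegree (q : K) (f : MvPolynomial (Fin ℓ × Fin n) K) (r : ℕ) : Prop :=
  ∀ d : Fin ℓ → ℕ, ∑ i, d i = r → Dq ℓ n q d f = 0

lemma IsHarmonicInDegree.add (hq : q ≠ 0) {r s : ℕ} (hrs : (r : K) ≠ s)
    (hr : IsHarmonicInDegree q f r) (hs : IsHarmonicInDegree q f s) :
    IsHarmonicInDegree q f (r + s) := by
  intro d hd
  obtain ⟨a, b, rfl, ha, hb⟩ := exists_add_eq_of_sum_eq_add hd
  have lie_apply : ⁅Dq ℓ n q a, Dq ℓ n q b⁆ f = 0 := by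
    simp [Ring.lie_def, hr a ha, hs b hb]
  rw [lie_Dq_Dq, ha, hb, LinearMap.smul_apply] at lie_apply
  exact (smul_eq_zero.mp lie_apply).resolve_left (mul_ne_zero hq (sub_ne_zero.mpr hrs))

lemma IsHarmonicInDegree.mul_of_two_mul (hq : q ≠ 0) (h2 : (2 : K) ≠ 0) {m : ℕ} (hm : (m : K) ≠ 0)
    (h_m : IsHarmonicInDegree q f m) (h_2m : IsHarmonicInDegree q f (2 * m)) {k : ℕ} (hk : 0 < k) :
    IsHarmonicInDegree q f (m * k) := by
  induction k using Nat.strong_induction_on with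
  | _ k ih =>
    match k, hk with
    | 1, _ => rwa [mul_one]
    | 2, _ => rwa [mul_comm]
    | k + 3, _ =>
      by_cases hk_add_one : ((k + 1 : ℕ) : K) = 0
      · have degrees_ne : ((2 * m : ℕ) : K) ≠ (m * (k + 1) : ℕ) := by
          rw [Nat.cast_mul m, hk_add_one, mul_zero, Nat.cast_mul]
          exact mul_ne_zero h2 hm
        rw [show m * (k + 3) = 2 * m + m * (k + 1) by ring]
        exact h_2m.add hq degrees_ne (ih (k + 1) (by omega) (by omega))
      · have degrees_ne : (m : K) ≠ (m * (k + 2) : ℕ) := by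
          rw [show m * (k + 2) = m + m * (k + 1) by ring, Nat.cast_add, ne_eq, left_eq_add,
            Nat.cast_mul]
          exact mul_ne_zero hm hk_add_one
        rw [show m * (k + 3) = m + m * (k + 2) by ring]
        exact h_m.add hq degrees_ne (ih (k + 2) (by omega) (by omega))

end HarmonicInDegree

theorem qHarmonic_iff_low_degrees_general {K : Type*} [Field K] {ℓ n : ℕ} (q : K) (hq : q ≠ 0)
    (h2 : (2 : K) ≠ 0) (m : ℕ) (hm : (m : K) ≠ 0) (f : MvPolynomial (Fin ℓ × Fin n) K) :
    (∀ d : Fin ℓ → ℕ, (∃ k : ℕ, 0 < k ∧ ∑ i, d i = m * k) → Dq ℓ n q d f = 0)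
      ↔ (∀ d : Fin ℓ → ℕ, (∑ i, d i = m ∨ ∑ i, d i = 2 * m) → Dq ℓ n q d f = 0) := by
  constructor
  · rintro h d (hd | hd)
    · exact h d ⟨1, one_pos, by rw [hd, mul_one]⟩
    · exact h d ⟨2, two_pos, by rw [hd, mul_comm]⟩
  · rintro h d ⟨k, hk, hd⟩
    have h_m : IsHarmonicInDegree q f m := fun a ha => h a (.inl ha)
    have h_2m : IsHarmonicInDegree q f (2 * m) := fun a ha => h a (.inr ha)
    exact h_m.mul_of_two_mul hq h2 hm h_2m hk d hd

/-- A polynomial is diagonally `(G(m,n),q)`-harmonic iff it is killed by the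
operators `D_{q,d}` with `|d| = m` or `|d| = 2m`. -/
theorem qHarmonic_iff_low_degrees {K : Type*} [Field K] [CharZero K] {ℓ n : ℕ}
    (hℓ : 1 ≤ ℓ) (hn : 1 ≤ n) (q : K) (hq : q ≠ 0) (m : ℕ) (hm : 1 ≤ m)
    (f : MvPolynomial (Fin ℓ × Fin n) K) :
    (∀ d : Fin ℓ → ℕ, (∃ k : ℕ, 0 < k ∧ ∑ i, d i = m * k) → Dq ℓ n q d f = 0)
      ↔ (∀ d : Fin ℓ → ℕ, (∑ i, d i = m ∨ ∑ i, d i = 2 * m) → Dq ℓ n q d f = 0) := by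
  exact qHarmonic_iff_low_degrees_general q hq two_ne_zero m
    (Nat.cast_ne_zero.mpr (Nat.one_le_iff_ne_zero.mp hm)) f
end

section
/- Let m ≥ 1 and suppose q = −1/m. Then the 2m+1 polynomials {1, x, x^2, …, x^{m−1}, x^m − y^m, y, y^2, …, y^{m−1}} ∪ {x^{2m} − y^{2m}} form a K-basis of the space H_q(G(m,m,2)) := {f ∈ K[x,y] : D_{q,m} f = 0, D_{q,2m} f = 0, ∂_x∂_y f = 0} of q-harmonic polynomials for the dihedral group G(m,m,2). -/
open MvPolynomial

/-- The deformed operator `D_{q,k} = (1 + q x∂_x)∂_x^k + (1 + q y∂_y)∂_y^k` on `K[x,y]`,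
with `x = X 0` and `y = X 1`. -/
noncomputable def D2 {K : Type*} [Field K] (q : K) (k : ℕ) :
    Module.End K (MvPolynomial (Fin 2) K) :=
  (1 + q • (LinearMap.mulLeft K (X 0) * (pderiv 0).toLinearMap)) *
      ((pderiv (0 : Fin 2)).toLinearMap : Module.End K (MvPolynomial (Fin 2) K)) ^ k
    + (1 + q • (LinearMap.mulLeft K (X 1) * (pderiv 1).toLinearMap)) *
        ((pderiv (1 : Fin 2)).toLinearMap : Module.End K (MvPolynomial (Fin 2) K)) ^ k

/-- The deformed Pochhammer symbol `⟨d⟩_k = d(d-1)⋯(d-k+1)(1 + q(d-k))`. -/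
noncomputable def tp {K : Type*} [Field K] (q : K) (d k : ℕ) : K :=
  (∏ i ∈ Finset.range k, ((d : K) - (i : K))) * (1 + q * ((d : K) - (k : K)))

/-!
Compare coefficients. For `k ≥ 1` the operator `D2 q k` sends `x ^ d` to
`tp q d k • x ^ (d - k)`, and for `q = -1/m` the symbol `tp q d k` vanishes exactly when `d < k`
or `d = k + m`. A polynomial killed by `∂_x ∂_y` is a sum of pure powers of `x` and of `y`. For
such a polynomial, being killed by `D2 q m` and `D2 q (2 * m)` means that the coefficients in
degrees `> m` vanish except in degree `2 * m`, and that the coefficients of `x ^ k` and `y ^ k`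
are opposite for `k = m` and `k = 2 * m`. Hence the coefficients of
`1, …, x ^ m, y ^ (m - 1), …, y, x ^ (2 * m)` are coordinates on the space of solutions, and the
family of the theorem is dual to them.
-/

open Finsupp (single)

theorem exists_eq_single_or_ne_zero {M : Type*} [Zero M] (s : Fin 2 →₀ M) :
    (∃ i n, s = single i n) ∨ s 0 ≠ 0 ∧ s 1 ≠ 0 := by
  by_cases h0 : s 0 = 0
  · exact .inl ⟨1, s 1, by ext l; fin_cases l <;> simp [h0]⟩
  by_cases h1 : s 1 = 0
  · exact .inl ⟨0, s 0, by ext l; fin_cases l <;> simp [h1]⟩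
  exact .inr ⟨h0, h1⟩

section CoeffDerivatives

variable {σ R : Type*} [CommSemiring R]

theorem coeff_X_mul_pderiv (s : σ →₀ ℕ) (i : σ) (f : MvPolynomial σ R) :
    coeff s (X i * pderiv i f) = s i * coeff s f := by
  induction f using MvPolynomial.induction_on' with
  | monomial t r =>
    classical
    rw [X_mul_pderiv_monomial, coeff_smul, coeff_monomial, nsmul_eq_mul]
    split_ifs with hts
    · rw [hts]
    · simp
  | add f g hf hg => simp only [map_add, mul_add, coeff_add, hf, hg]

theorem coeff_pderiv_pow (s : σ →₀ ℕ) (i : σ) (k : ℕ) (f : MvPolynomial σ R) :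
    coeff s (((pderiv i).toLinearMap ^ k : Module.End R (MvPolynomial σ R)) f) =
      (s i + k).descFactorial k * coeff (s + single i k) f := by
  induction k generalizing f with
  | zero => simp
  | succ k ih =>
    rw [pow_succ, Module.End.mul_apply, ih, ← add_assoc, Nat.succ_descFactorial_succ]
    simp only [Derivation.coeFn_coe, coeff_pderiv, add_assoc, ← Finsupp.single_add,
      Finsupp.add_apply, Finsupp.single_eq_same]
    push_cast
    ring

theorem coeff_eq_zero_of_pderiv_pderiv_eq_zero [NoZeroDivisors R] [CharZero R] {i j : σ}
    (hij : i ≠ j) {f : MvPolynomial σ R} (hf : pderiv i (pderiv j f) = 0) {s : σ →₀ ℕ}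
    (hi : s i ≠ 0) (hj : s j ≠ 0) : coeff s f = 0 := by
  have hle : single i 1 + single j 1 ≤ s := by
    classical
    intro l
    simp only [Finsupp.add_apply, Finsupp.single_apply]
    grind
  obtain ⟨t, rfl⟩ := exists_add_of_le hle
  have hcoeff : coeff (single i 1 + single j 1 + t) f * (t j + 1) * (t i + 1) = 0 := by
    simpa [coeff_pderiv, hij, add_comm, add_left_comm] using congrArg (coeff t) hf
  simpa [Nat.cast_add_one_ne_zero] using hcoeff

theorem eq_zero_of_coeff_single_eq_zero [NoZeroDivisors R] [CharZero R]
    {f : MvPolynomial (Fin 2) R} (hf : pderiv 0 (pderiv 1 f) = 0)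
    (h : ∀ i n, coeff (single i n) f = 0) : f = 0 := by
  ext s
  rcases exists_eq_single_or_ne_zero s with ⟨i, n, rfl⟩ | ⟨h0, h1⟩
  · exact h i n
  · exact coeff_eq_zero_of_pderiv_pderiv_eq_zero Fin.zero_ne_one hf h0 h1

end CoeffDerivatives

section DeformedOperator

variable {K : Type*} [Field K] {k m : ℕ}

theorem tp_eq_descFactorial_mul (q : K) (d k : ℕ) :
    tp q d k = d.descFactorial k * (1 + q * (d - k)) := by
  rw [tp, ← descPochhammer_eval_eq_prod_range, descPochhammer_eval_eq_descFactorial]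

theorem coeff_D2 (q : K) (k : ℕ) (s : Fin 2 →₀ ℕ) (f : MvPolynomial (Fin 2) K) :
    coeff s (D2 q k f) = ∑ i, tp q (s i + k) k * coeff (s + single i k) f := by
  simp only [D2, LinearMap.add_apply, Module.End.mul_apply, Module.End.one_apply,
    LinearMap.smul_apply, LinearMap.mulLeft_apply, Derivation.coeFn_coe, coeff_add, coeff_smul,
    coeff_X_mul_pderiv, coeff_pderiv_pow, smul_eq_mul, Fin.sum_univ_two, tp_eq_descFactorial_mul]
  push_cast
  ring

theorem coeff_zero_D2 (q : K) (k : ℕ) (f : MvPolynomial (Fin 2) K) :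
    coeff 0 (D2 q k f) = tp q k k * (coeff (single 0 k) f + coeff (single 1 k) f) := by
  simp [coeff_D2, mul_add]

variable [CharZero K] {q : K}

theorem tp_self_ne_zero (q : K) (k : ℕ) : tp q k k ≠ 0 := by
  simp [tp_eq_descFactorial_mul, Nat.descFactorial_self, Nat.factorial_ne_zero]

theorem tp_eq_zero_iff_of_one_add_mul_eq_zero (hq : 1 + q * m = 0) {d : ℕ} :
    tp q d k = 0 ↔ d < k ∨ d = k + m := by
  have hq0 : q ≠ 0 := by rintro rfl; simp at hq
  have hfactor : 1 + q * ((d : K) - k) = q * (d - (k + m : ℕ)) := by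
    push_cast
    linear_combination hq
  rw [tp_eq_descFactorial_mul, hfactor, mul_eq_zero, Nat.cast_eq_zero,
    Nat.descFactorial_eq_zero_iff_lt, mul_eq_zero, or_iff_right hq0, sub_eq_zero, Nat.cast_inj]

variable {f : MvPolynomial (Fin 2) K}

theorem coeff_single_D2 (q : K) (hf : pderiv 0 (pderiv 1 f) = 0) (hk : k ≠ 0) (i : Fin 2)
    {n : ℕ} (hn : n ≠ 0) :
    coeff (single i n) (D2 q k f) = tp q (n + k) k * coeff (single i (n + k)) f := by
  rw [coeff_D2, Finset.sum_eq_single i _ (by simp), Finsupp.single_eq_same, Finsupp.single_add]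
  intro j _ hji
  rw [coeff_eq_zero_of_pderiv_pderiv_eq_zero Fin.zero_ne_one hf, mul_zero] <;>
    fin_cases i <;> fin_cases j <;> simp_all

theorem D2_apply_eq_zero_iff (hf : pderiv 0 (pderiv 1 f) = 0) (hk : k ≠ 0) :
    D2 q k f = 0 ↔ coeff (single 0 k) f + coeff (single 1 k) f = 0 ∧
      ∀ i d, k < d → tp q d k = 0 ∨ coeff (single i d) f = 0 := by
  have hconst : coeff 0 (D2 q k f) = 0 ↔ coeff (single 0 k) f + coeff (single 1 k) f = 0 := by
    rw [coeff_zero_D2, mul_eq_zero, or_iff_right (tp_self_ne_zero q k)]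
  constructor
  · intro hD
    refine ⟨hconst.1 (by rw [hD, coeff_zero]), fun i d hd ↦ ?_⟩
    have hcoeff := coeff_single_D2 q hf hk i (Nat.sub_ne_zero_of_lt hd)
    rw [Nat.sub_add_cancel hd.le, hD, coeff_zero] at hcoeff
    exact mul_eq_zero.1 hcoeff.symm
  · rintro ⟨hsum, hhigh⟩
    ext s
    rw [coeff_zero]
    rcases exists_eq_single_or_ne_zero s with ⟨i, n, rfl⟩ | ⟨h0, h1⟩
    · rcases eq_or_ne n 0 with rfl | hn
      · rw [Finsupp.single_zero, hconst.2 hsum]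
      · rw [coeff_single_D2 q hf hk i hn]
        exact mul_eq_zero.2 (hhigh i _ (by lia))
    · rw [coeff_D2]
      refine Finset.sum_eq_zero fun i _ ↦ mul_eq_zero_of_right _ ?_
      exact coeff_eq_zero_of_pderiv_pderiv_eq_zero Fin.zero_ne_one hf (by simp [h0]) (by simp [h1])

end DeformedOperator

section Harmonic

variable {K : Type*} [Field K] {q : K} {m : ℕ}

/-- The space `H_q(G(m,m,2))` of `q`-harmonic polynomials for the dihedral group `G(m,m,2)`. -/
noncomputable def qHarmonic (q : K) (m : ℕ) : Submodule K (MvPolynomial (Fin 2) K) :=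
  LinearMap.ker (D2 q m) ⊓ LinearMap.ker (D2 q (2 * m)) ⊓
    LinearMap.ker ((pderiv 0).toLinearMap * (pderiv 1).toLinearMap :
      Module.End K (MvPolynomial (Fin 2) K))

variable [CharZero K]

theorem mem_qHarmonic_iff (hq : 1 + q * m = 0) {f : MvPolynomial (Fin 2) K} :
    f ∈ qHarmonic q m ↔ pderiv 0 (pderiv 1 f) = 0 ∧
      (∀ k, k = m ∨ k = 2 * m → coeff (single 0 k) f + coeff (single 1 k) f = 0) ∧
      ∀ i d, m < d → d ≠ 2 * m → coeff (single i d) f = 0 := by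
  have hm : m ≠ 0 := by rintro rfl; simp at hq
  simp only [qHarmonic, Submodule.mem_inf, LinearMap.mem_ker, Module.End.mul_apply,
    Derivation.coeFn_coe]
  rw [and_comm]
  refine and_congr_right fun hf ↦ ?_
  rw [D2_apply_eq_zero_iff hf hm, D2_apply_eq_zero_iff hf (by lia)]
  simp only [tp_eq_zero_iff_of_one_add_mul_eq_zero hq, forall_eq_or_imp, forall_eq]
  -- In degree `3 * m`, which `D2 q (2 * m)` misses, vanishing already follows from `D2 q m`.
  grind

theorem X_pow_mem_qHarmonic (hq : 1 + q * m = 0) (i : Fin 2) {n : ℕ} (hn : n < m) :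
    (X i : MvPolynomial (Fin 2) K) ^ n ∈ qHarmonic q m := by
  rw [mem_qHarmonic_iff hq]
  refine ⟨by fin_cases i <;> simp [pderiv_X], fun k hk ↦ ?_, fun j d hd _ ↦ ?_⟩
  · simp [coeff_single_X_pow, show n ≠ k by lia, show k ≠ 0 by lia]
  · simp [coeff_single_X_pow, show n ≠ d by lia, show d ≠ 0 by lia]

theorem X_pow_sub_X_pow_mem_qHarmonic (hq : 1 + q * m = 0) {k : ℕ}
    (hk : k = m ∨ k = 2 * m) :
    (X 0 : MvPolynomial (Fin 2) K) ^ k - X 1 ^ k ∈ qHarmonic q m := by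
  rw [mem_qHarmonic_iff hq]
  refine ⟨by simp [pderiv_X], fun l _ ↦ ?_, fun j d hd hd' ↦ ?_⟩
  · simp [coeff_single_X_pow]
  · simp [coeff_single_X_pow, show k ≠ d by lia, show d ≠ 0 by lia]

end Harmonic

section DualFamily

variable {K : Type*} [Field K] {q : K} {m : ℕ}

/-- The polynomials `1, x, …, x^(m-1), x^m - y^m, y^(m-1), …, y, x^(2m) - y^(2m)`, in this order. -/
noncomputable def qHarmonicFamily (R : Type*) [CommRing R] (m : ℕ) (i : Fin (2 * m + 1)) :
    MvPolynomial (Fin 2) R :=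
  if (i : ℕ) < m then X 0 ^ (i : ℕ)
  else if (i : ℕ) = m then X 0 ^ m - X 1 ^ m
  else if (i : ℕ) < 2 * m then X 1 ^ (2 * m - (i : ℕ))
  else X 0 ^ (2 * m) - X 1 ^ (2 * m)

/-- The exponents of the monomials `1, x, …, x^m, y^(m-1), …, y, x^(2m)`, in this order. Each
occurs in exactly one member of `qHarmonicFamily`: in `x^k - y^k` it is `x^k` which is selected. -/
noncomputable def leadExponent (m : ℕ) (i : Fin (2 * m + 1)) : Fin 2 →₀ ℕ :=
  if (i : ℕ) ≤ m then single 0 (i : ℕ)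
  else if (i : ℕ) < 2 * m then single 1 (2 * m - (i : ℕ))
  else single 0 (2 * m)

theorem leadExponent_injective (m : ℕ) : Function.Injective (leadExponent m) := by
  intro i j hij
  unfold leadExponent at hij
  split_ifs at hij <;> simp only [Finsupp.single_eq_single_iff] at hij <;> lia

theorem leadExponent_ne_single_one (hm : m ≠ 0) (i : Fin (2 * m + 1)) {k : ℕ}
    (hk : k = m ∨ k = 2 * m) : leadExponent m i ≠ single 1 k := by
  unfold leadExponent
  split_ifs <;> simp only [ne_eq, Finsupp.single_eq_single_iff] <;> lia

theorem exists_leadExponent_eq_single_zero {n : ℕ} (hn : n ≤ m ∨ n = 2 * m) :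
    ∃ i, leadExponent m i = single 0 n := by
  refine ⟨⟨n, by lia⟩, ?_⟩
  simp only [leadExponent]
  grind

theorem exists_leadExponent_eq_single_one {n : ℕ} (hn : n < m) :
    ∃ i, leadExponent m i = single 1 n := by
  rcases eq_or_ne n 0 with rfl | hn0
  · simpa using exists_leadExponent_eq_single_zero (.inl m.zero_le)
  · refine ⟨⟨2 * m - n, by lia⟩, ?_⟩
    rw [leadExponent, if_neg (by grind), if_pos (by grind), Nat.sub_sub_self (by lia)]

theorem qHarmonicFamily_eq_monomial_sub (R : Type*) [CommRing R] (m : ℕ) (i : Fin (2 * m + 1)) :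
    qHarmonicFamily R m i = monomial (leadExponent m i) 1 -
      if (i : ℕ) = m ∨ (i : ℕ) = 2 * m then X 1 ^ (i : ℕ) else 0 := by
  unfold qHarmonicFamily leadExponent
  grind [X_pow_eq_monomial]

theorem coeff_leadExponent_qHarmonicFamily (R : Type*) [CommRing R] (hm : m ≠ 0)
    (i j : Fin (2 * m + 1)) :
    coeff (leadExponent m i) (qHarmonicFamily R m j) = if i = j then 1 else 0 := by
  have htail : coeff (leadExponent m i)
      (if (j : ℕ) = m ∨ (j : ℕ) = 2 * m then (X 1 : MvPolynomial (Fin 2) R) ^ (j : ℕ) else 0) =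
        0 := by
    split_ifs with hj
    · rw [coeff_X_pow, if_neg (leadExponent_ne_single_one hm i hj).symm]
    · exact coeff_zero _
  rw [qHarmonicFamily_eq_monomial_sub, coeff_sub, htail, sub_zero, coeff_monomial]
  simp only [(leadExponent_injective m).eq_iff, eq_comm]

theorem qHarmonicFamily_mem_qHarmonic [CharZero K] (hq : 1 + q * m = 0) (i : Fin (2 * m + 1)) :
    qHarmonicFamily K m i ∈ qHarmonic q m := by
  unfold qHarmonicFamily
  split_ifs with hlt heq hlt'
  · exact X_pow_mem_qHarmonic hq 0 hlt
  · exact X_pow_sub_X_pow_mem_qHarmonic hq (.inl rfl)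
  · exact X_pow_mem_qHarmonic hq 1 (by lia)
  · exact X_pow_sub_X_pow_mem_qHarmonic hq (.inr rfl)

theorem eq_zero_of_coeff_leadExponent_eq_zero [CharZero K] (hq : 1 + q * m = 0)
    {f : MvPolynomial (Fin 2) K} (hf : f ∈ qHarmonic q m)
    (hlead : ∀ i, coeff (leadExponent m i) f = 0) : f = 0 := by
  obtain ⟨hmixed, hsum, hhigh⟩ := (mem_qHarmonic_iff hq).1 hf
  have hx (n : ℕ) (hn : n ≤ m ∨ n = 2 * m) : coeff (single 0 n) f = 0 := by
    obtain ⟨i, hi⟩ := exists_leadExponent_eq_single_zero hn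
    rw [← hi, hlead]
  have hy (n : ℕ) (hn : n ≤ m ∨ n = 2 * m) : coeff (single 1 n) f = 0 := by
    by_cases hnm : n < m
    · obtain ⟨i, hi⟩ := exists_leadExponent_eq_single_one hnm
      rw [← hi, hlead]
    · simpa [hx n hn] using hsum n (by lia)
  refine eq_zero_of_coeff_single_eq_zero hmixed fun i n ↦ ?_
  by_cases hn : n ≤ m ∨ n = 2 * m
  · fin_cases i
    exacts [hx n hn, hy n hn]
  · exact hhigh i n (by lia) (by lia)

theorem dualBases_qHarmonicFamily [CharZero K] (hq : 1 + q * m = 0) :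
    Module.DualBases
      (fun i ↦ (⟨qHarmonicFamily K m i, qHarmonicFamily_mem_qHarmonic hq i⟩ : qHarmonic q m))
      (fun i ↦ (lcoeff K (leadExponent m i)).domRestrict (qHarmonic q m)) := by
  have hm : m ≠ 0 := by rintro rfl; simp at hq
  refine ⟨fun i ↦ ?_, fun i j hij ↦ ?_, fun {f g} hfg ↦ ?_, fun _ ↦ Set.toFinite _⟩
  · simp [coeff_leadExponent_qHarmonicFamily K hm]
  · simp [coeff_leadExponent_qHarmonicFamily K hm, hij]
  · refine sub_eq_zero.1 (Subtype.ext ?_)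
    exact eq_zero_of_coeff_leadExponent_eq_zero hq (f - g).2 fun i ↦ by
      simpa [sub_eq_zero] using hfg i

end DualFamily

/-- For the singular value `q = -1/m`, the `2m+1` polynomials
`1, x, …, x^{m-1}, x^m - y^m, y^{m-1}, …, y, x^{2m} - y^{2m}` form a basis of the
`q`-harmonic polynomials for the dihedral group `G(m,m,2)`. -/
theorem basis_qHarmonic_dihedral_singular_m {K : Type*} [Field K] [CharZero K] (q : K)
    (m : ℕ) (hm : 1 ≤ m) (hq : q = -(1 : K) / (m : K)) :
    LinearIndependent K (fun i : Fin (2 * m + 1) =>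
      if (i : ℕ) < m then (X 0 : MvPolynomial (Fin 2) K) ^ (i : ℕ)
      else if (i : ℕ) = m then (X 0 : MvPolynomial (Fin 2) K) ^ m - X 1 ^ m
      else if (i : ℕ) < 2 * m then (X 1 : MvPolynomial (Fin 2) K) ^ (2 * m - (i : ℕ))
      else (X 0 : MvPolynomial (Fin 2) K) ^ (2 * m) - X 1 ^ (2 * m))
    ∧ Submodule.span K (Set.range (fun i : Fin (2 * m + 1) =>
        if (i : ℕ) < m then (X 0 : MvPolynomial (Fin 2) K) ^ (i : ℕ)
        else if (i : ℕ) = m then (X 0 : MvPolynomial (Fin 2) K) ^ m - X 1 ^ m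
        else if (i : ℕ) < 2 * m then (X 1 : MvPolynomial (Fin 2) K) ^ (2 * m - (i : ℕ))
        else (X 0 : MvPolynomial (Fin 2) K) ^ (2 * m) - X 1 ^ (2 * m)))
      = LinearMap.ker (D2 q m) ⊓ LinearMap.ker (D2 q (2 * m)) ⊓
          LinearMap.ker ((pderiv 0).toLinearMap * (pderiv 1).toLinearMap :
            Module.End K (MvPolynomial (Fin 2) K)) := by
  have hm0 : (m : K) ≠ 0 := Nat.cast_ne_zero.2 (by lia)
  have hqm : 1 + q * m = 0 := by rw [hq, div_mul_cancel₀ _ hm0, add_neg_cancel]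
  let b : Module.Basis _ K (qHarmonic q m) := (dualBases_qHarmonicFamily hqm).basis
  have hb : (qHarmonic q m).subtype ∘ b = qHarmonicFamily K m := by
    ext1 i
    simp [b]
  change LinearIndependent K (qHarmonicFamily K m) ∧
    Submodule.span K (Set.range (qHarmonicFamily K m)) = qHarmonic q m
  rw [← hb]
  constructor
  · exact b.linearIndependent.map' _ (Submodule.ker_subtype _)
  · rw [Set.range_comp, ← Submodule.map_span, b.span_eq, Submodule.map_subtype_top]
end
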